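/- arXiv:1508.04589 — 3 statements merged into one kernel-verified Lean document; each statement's English description precedes it below -/
import Mathlib

section
/- There exists a unique real number α > 0 satisfying 1 + e^{−α} − α = 0. Moreover, if for each integer m ≥ 3, Q_m ∈ (0,1) denotes the unique root of 1 + Q^m − ((1−Q²)/2)m = 0 in (0,1), then m(1 − Q_m) → α as m → ∞; in particular Q_m ≈ 1 − α/m for large m. -/
/-!
Write `x = m (1 - q)` for a root `q` of the dispersion relation. Expanding `1 - q ^ 2` around
`q = 1` and comparing `q ^ m = (1 - x / m) ^ m` with `exp (-x)` shows that `x` is a fixed point of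
`f x = 1 + exp (-x)` up to an error `O(1 / m)`. Since `f` is antitone, a point lies at most as far
from a fixed point of `f` as it is moved by `f`; hence the fixed point `a` is unique and
`|x - a| = O(1 / m)`.
-/

open Filter Real Set

theorem abs_sub_le_abs_sub_apply_of_antitone {G : Type*} [AddCommGroup G] [LinearOrder G]
    [IsOrderedAddMonoid G] {f : G → G} (hf : Antitone f) {a : G} (ha : f a = a) (x : G) :
    |x - a| ≤ |x - f x| := by
  rcases le_total x a with hxa | hax
  · have hfx : a ≤ f x := ha ▸ hf hxa
    rw [abs_sub_comm x a, abs_sub_comm x (f x), abs_of_nonneg (sub_nonneg.2 hxa)]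
    exact (sub_le_sub_right hfx x).trans (le_abs_self _)
  · have hfx : f x ≤ a := ha ▸ hf hax
    rw [abs_of_nonneg (sub_nonneg.2 hax)]
    exact (sub_le_sub_left hfx x).trans (le_abs_self _)

theorem antitone_one_add_exp_neg : Antitone fun x : ℝ => 1 + exp (-x) := by
  intro x y hxy
  dsimp only
  gcongr

theorem existsUnique_one_add_exp_neg_eq : ∃! a : ℝ, 1 + exp (-a) = a := by
  have hmaps : MapsTo (fun x : ℝ => 1 + exp (-x)) (Icc 0 2) (Icc 0 2) := by
    intro x hx
    have hexp : exp (-x) ≤ 1 := exp_le_one_iff.2 (neg_nonpos.2 hx.1)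
    exact ⟨by positivity, by linarith⟩
  obtain ⟨a, -, ha⟩ := exists_mem_Icc_isFixedPt_of_mapsTo (by fun_prop) zero_le_two hmaps
  refine ⟨a, ha, fun b hb => sub_eq_zero.1 (abs_nonpos_iff.1 ?_)⟩
  simpa only [hb, sub_self, abs_zero] using
    abs_sub_le_abs_sub_apply_of_antitone antitone_one_add_exp_neg ha b

theorem exp_neg_nat_mul_sub_one_sub_pow_mem_Icc {u : ℝ} (hu : u ∈ Icc 0 1) (m : ℕ) :
    exp (-(m * u)) - (1 - u) ^ m ∈ Icc 0 (m * u ^ 2) := by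
  have hbase : 0 ≤ 1 - u := sub_nonneg.2 hu.2
  have hle : 1 - u ≤ exp (-u) := one_sub_le_exp_neg u
  have hexp : exp (-u) ≤ 1 := exp_le_one_iff.2 (neg_nonpos.2 hu.1)
  have hpow : exp (-(m * u)) = exp (-u) ^ m := by rw [← exp_nat_mul, mul_neg]
  have hdiff : exp (-u) - (1 - u) ≤ u ^ 2 := by
    have habs : |-u| ≤ 1 := by rw [abs_neg, abs_of_nonneg hu.1]; exact hu.2
    calc exp (-u) - (1 - u) = exp (-u) - 1 - -u := by ring
      _ ≤ (-u) ^ 2 := le_of_abs_le (abs_exp_sub_one_sub_id_le habs)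
      _ = u ^ 2 := neg_sq u
  have hmax : max |exp (-u)| |1 - u| ≤ 1 := by
    rw [abs_of_pos (exp_pos _), abs_of_nonneg hbase]
    exact max_le hexp (hle.trans hexp)
  rw [hpow]
  refine ⟨sub_nonneg.2 (pow_le_pow_left₀ hbase hle m), ?_⟩
  calc exp (-u) ^ m - (1 - u) ^ m
      ≤ |exp (-u) ^ m - (1 - u) ^ m| := le_abs_self _
    _ ≤ |exp (-u) - (1 - u)| * m * max |exp (-u)| |1 - u| ^ (m - 1) := abs_pow_sub_pow_le ..
    _ ≤ u ^ 2 * m * 1 := by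
        rw [abs_of_nonneg (sub_nonneg.2 hle)]
        gcongr
        exact pow_le_one₀ (by positivity) hmax
    _ = m * u ^ 2 := by ring

section DispersionRoot

variable {m : ℕ} {q : ℝ}

theorem nat_mul_one_sub_le_four_of_dispersion (hq : q ∈ Icc 0 1)
    (hroot : 1 + q ^ m - (1 - q ^ 2) / 2 * m = 0) : m * (1 - q) ≤ 4 := by
  have hone_sub : 0 ≤ 1 - q := sub_nonneg.2 hq.2
  calc m * (1 - q) ≤ m * (1 - q) * (1 + q) :=
        le_mul_of_one_le_right (by positivity) (le_add_of_nonneg_right hq.1)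
    _ = 2 * (1 + q ^ m) := by linear_combination -2 * hroot
    _ ≤ 4 := by linarith [pow_le_one₀ hq.1 hq.2 (n := m)]

theorem abs_nat_mul_one_sub_sub_one_add_exp_neg_le_of_dispersion (hq : q ∈ Icc 0 1)
    (hroot : 1 + q ^ m - (1 - q ^ 2) / 2 * m = 0) :
    |m * (1 - q) - (1 + exp (-(m * (1 - q))))| ≤ m * (1 - q) ^ 2 / 2 := by
  obtain ⟨hlower, hupper⟩ := exp_neg_nat_mul_sub_one_sub_pow_mem_Icc
    ⟨sub_nonneg.2 hq.2, sub_le_self 1 hq.1⟩ m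
  rw [sub_sub_cancel] at hlower hupper
  have hexpand : m * (1 - q) = 1 + q ^ m + m * (1 - q) ^ 2 / 2 := by
    linear_combination -hroot
  rw [abs_le]
  constructor <;> linarith only [hexpand, hlower, hupper]

theorem abs_nat_mul_one_sub_sub_le_of_dispersion (hq : q ∈ Icc 0 1)
    (hroot : 1 + q ^ m - (1 - q ^ 2) / 2 * m = 0) {a : ℝ} (ha : 1 + exp (-a) = a) :
    |m * (1 - q) - a| ≤ 8 / m := by
  have hm : (0 : ℝ) < m := by
    refine Nat.cast_pos.2 (Nat.pos_of_ne_zero ?_)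
    rintro rfl
    norm_num at hroot
  have hx : 0 ≤ m * (1 - q) := mul_nonneg hm.le (sub_nonneg.2 hq.2)
  calc |m * (1 - q) - a|
      ≤ |m * (1 - q) - (1 + exp (-(m * (1 - q))))| :=
        abs_sub_le_abs_sub_apply_of_antitone antitone_one_add_exp_neg ha _
    _ ≤ m * (1 - q) ^ 2 / 2 :=
        abs_nat_mul_one_sub_sub_one_add_exp_neg_le_of_dispersion hq hroot
    _ = (m * (1 - q)) ^ 2 / 2 / m := by field_simp
    _ ≤ 4 ^ 2 / 2 / m := by gcongr; exact nat_mul_one_sub_le_four_of_dispersion hq hroot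
    _ = 8 / m := by norm_num

end DispersionRoot

/-- There exists a unique `a > 0` with `1 + e^{-a} - a = 0`, and if for each
integer `m ≥ 3`, `Q m ∈ (0,1)` denotes the unique root of
`1 + Q^m - ((1 - Q^2)/2) m = 0` in `(0,1)`, then `m (1 - Q m) → a` as `m → ∞`. -/
theorem Qm_asymptotic_behavior (Q : ℕ → ℝ)
    (hQ : ∀ m : ℕ, 3 ≤ m → Q m ∈ Set.Ioo (0:ℝ) 1 ∧
      1 + Q m ^ m - (1 - Q m ^ 2) / 2 * m = 0) :
    (∃! a : ℝ, 0 < a ∧ 1 + Real.exp (-a) - a = 0) ∧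
    (∀ a : ℝ, 0 < a → 1 + Real.exp (-a) - a = 0 →
      Filter.Tendsto (fun m : ℕ => (m : ℝ) * (1 - Q m)) Filter.atTop (nhds a)) := by
  constructor
  · obtain ⟨a, ha, hunique⟩ := existsUnique_one_add_exp_neg_eq
    have ha_pos : 0 < a := ha ▸ (by positivity : 0 < 1 + exp (-a))
    exact ⟨a, ⟨ha_pos, sub_eq_zero.2 ha⟩, fun b hb => hunique b (sub_eq_zero.1 hb.2)⟩
  · intro a _ ha
    rw [tendsto_iff_norm_sub_tendsto_zero]
    refine squeeze_zero' (.of_forall fun _ => norm_nonneg _) ?_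
      (tendsto_const_div_atTop_nhds_zero_nat (8 : ℝ))
    filter_upwards [eventually_ge_atTop 3] with m hm
    obtain ⟨hmem, hroot⟩ := hQ m hm
    exact abs_nat_mul_one_sub_sub_le_of_dispersion (Ioo_subset_Icc_self hmem) hroot
      (sub_eq_zero.1 ha)
end

section
/- Let m ≥ 3 be an integer and Q_m ∈ (0,1) the unique root of 1 + Q^m − ((1−Q²)/2)m = 0 in (0,1). Then for every integer n ≥ 3 with n ≠ m one has 1 + Q_mⁿ − ((1−Q_m²)/2)n ≠ 0; more precisely, 1 + Q_mⁿ − ((1−Q_m²)/2)n > 0 for 3 ≤ n < m and < 0 for n > m. -/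
/-!
As a function of the mode number `n`, the dispersion function is the antitone function `1 + Q ^ n`
minus a linear function of positive slope, so it is strictly decreasing. Its sign at `n` is
therefore determined by the position of `n` relative to a zero `m`.
-/

theorem strictAnti_add_pow_sub_mul_natCast {R : Type*} [Ring R] [PartialOrder R]
    [IsStrictOrderedRing R] {q c : R} (hq₀ : 0 ≤ q) (hq₁ : q ≤ 1) (hc : 0 < c) (a : R) :
    StrictAnti fun n : ℕ ↦ a + q ^ n - c * n := by
  have h_pow : Antitone fun n : ℕ ↦ a + q ^ n := (pow_right_anti₀ hq₀ hq₁).const_add a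
  have h_linear : StrictMono fun n : ℕ ↦ c * (n : R) := Nat.strictMono_cast.const_mul hc
  simpa only [sub_eq_add_neg] using h_pow.add_strictAnti h_linear.neg

/-- The dispersion function of the linearized V-state operator at the ellipse `{w + Q / w}`, whose
zeros in `Q` are where mode `n` enters the kernel. It is defined over any field and for every `n`,
although only real `Q` and modes `n ≥ 3` have this meaning. -/
def dispersion {K : Type*} [Field K] (Q : K) (n : ℕ) : K :=
  1 + Q ^ n - (1 - Q ^ 2) / 2 * n

section Dispersion

variable {K : Type*} [Field K] [LinearOrder K] [IsStrictOrderedRing K] {Q : K} {m n : ℕ}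

theorem strictAnti_dispersion (hQ : Q ∈ Set.Ico 0 1) : StrictAnti (dispersion Q) :=
  have h_slope : 0 < (1 - Q ^ 2) / 2 :=
    half_pos (sub_pos.mpr (pow_lt_one₀ hQ.1 hQ.2 two_ne_zero))
  strictAnti_add_pow_sub_mul_natCast hQ.1 hQ.2.le h_slope 1

theorem dispersion_nonresonance_general (hQ : Q ∈ Set.Ico 0 1) (hroot : dispersion Q m = 0)
    (hne : n ≠ m) :
    dispersion Q n ≠ 0 ∧ (n < m → 0 < dispersion Q n) ∧ (m < n → dispersion Q n < 0) := by
  have h_anti : StrictAnti (dispersion Q) := strictAnti_dispersion hQ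
  rw [← hroot]
  exact ⟨h_anti.injective.ne hne, @h_anti n m, @h_anti m n⟩

end Dispersion

/-- Non-resonance: if `m ≥ 3` and `Q ∈ (0,1)` satisfies
`1 + Q^m - ((1 - Q^2)/2) m = 0`, then for every integer `n ≥ 3` with `n ≠ m`
one has `1 + Q^n - ((1 - Q^2)/2) n ≠ 0`; more precisely it is positive for
`3 ≤ n < m` and negative for `n > m`. -/
theorem dispersion_nonresonance (m : ℕ) (hm : 3 ≤ m) (Q : ℝ)
    (hQ : Q ∈ Set.Ioo (0:ℝ) 1)
    (hroot : 1 + Q ^ m - (1 - Q ^ 2) / 2 * m = 0) :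
    ∀ n : ℕ, 3 ≤ n → n ≠ m →
      (1 + Q ^ n - (1 - Q ^ 2) / 2 * n ≠ 0) ∧
      (n < m → 0 < 1 + Q ^ n - (1 - Q ^ 2) / 2 * n) ∧
      (m < n → 1 + Q ^ n - (1 - Q ^ 2) / 2 * n < 0) :=
  fun _ _ hne ↦ dispersion_nonresonance_general (Set.Ioo_subset_Ico_self hQ) hroot hne
end

section
/- Let Q ∈ (0,1) and suppose 1 + Qⁿ − ((1−Q²)/2)n ≠ 0 for every integer n ≥ 3 (i.e. Q does not belong to the dispersion set 𝒮). Then for any sequence of real numbers (a_n)_{n≥2}, the system [a₂ = 0, a₃ = 0, and (1 + Qⁿ − ((1−Q²)/2)n)·(a_{n+1} − Q a_{n−1}) = 0 for every n ≥ 3] implies a_n = 0 for all n ≥ 2. Hence the kernel of the linearized operator at the ellipse of parameter Q is trivial when Q ∉ 𝒮. -/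
theorem le_induction_two_step {P : ℕ → Prop} {m : ℕ} (base : P m) (base_succ : P (m + 1))
    (step : ∀ n, m ≤ n → P n → P (n + 2)) (n : ℕ) (hmn : m ≤ n) : P n := by
  obtain ⟨k, rfl⟩ := Nat.exists_eq_add_of_le hmn
  induction k using Nat.twoStepInduction with
  | zero => exact base
  | one => exact base_succ
  | more k ih _ => exact step (m + k) (Nat.le_add_right m k) (ih (Nat.le_add_right m k))

theorem kernel_trivial_off_dispersion_set_general {R M : Type*} [Ring R] [IsDomain R]
    [AddCommGroup M] [Module R M] [Module.IsTorsionFree R M] {m : ℕ} {c q : ℕ → R} {a : ℕ → M}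
    (hc : ∀ n, m + 1 ≤ n → c n ≠ 0) (ha : a m = 0) (ha_succ : a (m + 1) = 0)
    (hsys : ∀ n, m + 1 ≤ n → c n • (a (n + 1) - q n • a (n - 1)) = 0) :
    ∀ n, m ≤ n → a n = 0 := by
  refine le_induction_two_step ha ha_succ fun n hmn han ↦ ?_
  have hmn' : m + 1 ≤ n + 1 := Nat.succ_le_succ hmn
  have hrec : a (n + 2) - q (n + 1) • a n = 0 :=
    (smul_eq_zero.mp (hsys (n + 1) hmn')).resolve_left (hc (n + 1) hmn')
  calc
    a (n + 2) = q (n + 1) • a n := sub_eq_zero.mp hrec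
    _ = 0 := by rw [han, smul_zero]

/-- Trivial kernel off the dispersion set: if `Q ∈ (0,1)` satisfies
`1 + Qⁿ - ((1-Q²)/2)n ≠ 0` for every integer `n ≥ 3`, then any real sequence
`(a_n)_{n≥2}` solving the system `[a₂ = 0, a₃ = 0, and
`(1 + Qⁿ - ((1-Q²)/2)n)(a_{n+1} - Q a_{n-1}) = 0` for all `n ≥ 3]` vanishes:
`a_n = 0` for all `n ≥ 2`. -/
theorem kernel_trivial_off_dispersion_set (Q : ℝ) (hQ : Q ∈ Set.Ioo (0:ℝ) 1)
    (hnores : ∀ n : ℕ, 3 ≤ n → 1 + Q ^ n - (1 - Q ^ 2) / 2 * n ≠ 0)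
    (a : ℕ → ℝ)
    (ha2 : a 2 = 0) (ha3 : a 3 = 0)
    (hsys : ∀ n : ℕ, 3 ≤ n →
      (1 + Q ^ n - (1 - Q ^ 2) / 2 * n) * (a (n + 1) - Q * a (n - 1)) = 0) :
    ∀ n : ℕ, 2 ≤ n → a n = 0 :=
  kernel_trivial_off_dispersion_set_general (q := fun _ ↦ Q) hnores ha2 ha3 hsys
end
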